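/- Let F be an algebraically closed field of characteristic p > 0 and set a = 1 if p > 2 and a = 2 if p = 2. Let M be a function field over F, and let t ∈ M be transcendental over F with M/F(t) separable and such that all zeros and poles of t are simple. Let w be a nonzero element of the subfield F(t) ⊆ M such that every prime v of M with v(w) ≠ 0 is unramified over F(t). Suppose there exist u, v ∈ M with 1/w − 1/t = u^{p^a} − u and w − t = v^{p^a} − v. Then there exists a natural number s ≥ 0 with w = t^{p^{as}}. -/

import Mathlib

/-- A prime of a function field `M` over a constant field `F`: a surjective additive
valuation `M → ℤ` that is trivial on `F`. -/
structure FFPrime (F M : Type*) [Field F] [Field M] [Algebra F M] where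
  v : M → ℤ
  map_mul : ∀ x y : M, x ≠ 0 → y ≠ 0 → v (x * y) = v x + v y
  add_min : ∀ x y : M, x ≠ 0 → y ≠ 0 → x + y ≠ 0 → min (v x) (v y) ≤ v (x + y)
  surj : ∀ n : ℤ, ∃ x : M, x ≠ 0 ∧ v x = n
  triv : ∀ c : F, c ≠ 0 → v (algebraMap F M c) = 0

/-- A prime of `M` is unramified over `F(t)` if some nonzero element of `F(t)` has
valuation `1`. -/
def FFPrime.UnramifiedOver {F M : Type*} [Field F] [Field M] [Algebra F M]
    (P : FFPrime F M) (t : M) : Prop :=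
  ∃ r : M, r ∈ IntermediateField.adjoin F {t} ∧ r ≠ 0 ∧ P.v r = 1

/-!
Write `q = p ^ a ≥ 3`. A pole of an element `z ^ q - z` has order divisible by `q`, so comparing `w`
with `t` at the primes of `M` shows that the divisor of `w` on the projective `t`-line is divisible
by `q` away from `0` and `∞`, while at `0` (and, with opposite sign, at `∞`) it is either `1` or a
positive multiple of `q`.

If it is divisible by `q` at `0`, then `w = f ^ q` with `f ∈ F(t)`, and since `f ^ q - f` is itself
of the form `z ^ q - z`, the element `f` satisfies the same relations as `w`: descend.

If it is `1` at `0`, then `w = t * f ^ q`. For `c ≠ 0` and `γ ^ q = c`, the difference of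
`t * f ^ q - t` and `(γ * f) ^ q - γ * f` is `(t - c) * f ^ q + γ * f - t`. A pole of `f` of order
`n` above `c` would be a pole of this difference of order `q * n - 1`, which is not divisible by
`q`. So `f` is a polynomial in `t`; its degree is `0` by the behaviour of `w` at `∞`, and then
`w = t`.
-/

open IntermediateField
open scoped Polynomial

/-- The elements `z ^ q - z` of a ring. When `q` is a power of the characteristic they form an
additive group, and the two equations of the theorem are congruences modulo this group. -/
def IsArtinSchreier {R : Type*} [Ring R] (q : ℕ) (x : R) : Prop :=
  ∃ z, x = z ^ q - z

lemma isArtinSchreier_pow_sub_self {R : Type*} [Ring R] (q : ℕ) (z : R) :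
    IsArtinSchreier q (z ^ q - z) :=
  ⟨z, rfl⟩

lemma IsArtinSchreier.sub {R : Type*} [CommRing R] {p a : ℕ} [ExpChar R p] {x y : R}
    (hx : IsArtinSchreier (p ^ a) x) (hy : IsArtinSchreier (p ^ a) y) :
    IsArtinSchreier (p ^ a) (x - y) := by
  obtain ⟨z, rfl⟩ := hx
  obtain ⟨z', rfl⟩ := hy
  exact ⟨z - z', by rw [sub_pow_expChar_pow]; ring⟩

lemma IsArtinSchreier.sub_pow_mul_pow_sub {R : Type*} [CommRing R] {p a : ℕ} [ExpChar R p]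
    {y f : R} (h : IsArtinSchreier (p ^ a) (y * f ^ p ^ a - y)) (g : R) :
    IsArtinSchreier (p ^ a) ((y - g ^ p ^ a) * f ^ p ^ a - (y - g * f)) := by
  have h_eq : (y - g ^ p ^ a) * f ^ p ^ a - (y - g * f) =
      y * f ^ p ^ a - y - ((g * f) ^ p ^ a - g * f) := by ring
  exact h_eq ▸ h.sub (isArtinSchreier_pow_sub_self _ _)

namespace FFPrime

section Arithmetic

variable {F M : Type*} [Field F] [Field M] [Algebra F M] (P : FFPrime F M)

/-- A prime as a homomorphism on the multiplicative group of the field, which avoids the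
unspecified value of `P.v 0`. -/
noncomputable def unitsHom : Additive Mˣ →+ ℤ :=
  AddMonoidHom.mk' (fun x ↦ P.v (x.toMul : Mˣ)) fun x y ↦
    P.map_mul _ _ x.toMul.ne_zero y.toMul.ne_zero

lemma v_one : P.v 1 = 0 :=
  map_zero P.unitsHom

lemma v_zpow {x : M} (hx : x ≠ 0) (n : ℤ) : P.v (x ^ n) = n * P.v x := by
  simpa [unitsHom] using map_zsmul P.unitsHom n (.ofMul (Units.mk0 x hx))

lemma v_pow {x : M} (hx : x ≠ 0) (n : ℕ) : P.v (x ^ n) = n * P.v x :=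
  mod_cast P.v_zpow hx n

lemma v_inv {x : M} (hx : x ≠ 0) : P.v x⁻¹ = -P.v x := by
  simpa using P.v_zpow hx (-1)

lemma v_prod {ι : Type*} (s : Finset ι) {f : ι → M} (hf : ∀ i ∈ s, f i ≠ 0) :
    P.v (∏ i ∈ s, f i) = ∑ i ∈ s, P.v (f i) := by
  induction s using Finset.cons_induction with
  | empty => simp [P.v_one]
  | cons i s hi ih =>
    rw [Finset.forall_mem_cons] at hf
    rw [Finset.prod_cons, Finset.sum_cons, P.map_mul _ _ hf.1 (Finset.prod_ne_zero_iff.mpr hf.2),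
      ih hf.2]

lemma v_algebraMap_mul {c : F} (hc : c ≠ 0) {x : M} (hx : x ≠ 0) :
    P.v (algebraMap F M c * x) = P.v x := by
  rw [P.map_mul _ _ ((map_ne_zero _).mpr hc) hx, P.triv c hc, zero_add]

lemma v_neg {x : M} (hx : x ≠ 0) : P.v (-x) = P.v x := by
  simpa using P.v_algebraMap_mul (neg_ne_zero.mpr one_ne_zero) hx

lemma v_sub_eq_left {x y : M} (hx : x ≠ 0) (hy : y ≠ 0) (h : P.v x < P.v y) :
    P.v (x - y) = P.v x := by
  have hxy := sub_ne_zero.mpr (ne_of_apply_ne P.v h.ne)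
  have h_le := P.add_min x (-y) hx (neg_ne_zero.mpr hy) (by rwa [← sub_eq_add_neg])
  have h_ge := P.add_min (x - y) y hxy hy (by rwa [sub_add_cancel])
  rw [P.v_neg hy, ← sub_eq_add_neg] at h_le
  rw [sub_add_cancel] at h_ge
  omega

lemma v_sub_eq_right {x y : M} (hx : x ≠ 0) (hy : y ≠ 0) (h : P.v y < P.v x) :
    P.v (x - y) = P.v y := by
  rw [← neg_sub, P.v_neg (sub_ne_zero.mpr (ne_of_apply_ne P.v h.ne)), P.v_sub_eq_left hy hx h]

end Arithmetic

section ArtinSchreier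

variable {F M : Type*} [Field F] [Field M] [Algebra F M] (P : FFPrime F M) {q : ℕ} {x y : M}

lemma dvd_v_of_isArtinSchreier (hq : 2 ≤ q) (hx0 : x ≠ 0) (hx : IsArtinSchreier q x)
    (hneg : P.v x < 0) : (q : ℤ) ∣ P.v x := by
  obtain ⟨z, rfl⟩ := hx
  have hz : z ≠ 0 := by
    rintro rfl
    exact hx0 (by rw [zero_pow (by omega), sub_zero])
  have hzq := pow_ne_zero q hz
  have hzv : P.v z < 0 := by
    by_contra! hz_nonneg
    have h := P.add_min (z ^ q) (-z) hzq (neg_ne_zero.mpr hz) (by rwa [← sub_eq_add_neg])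
    rw [P.v_neg hz, ← sub_eq_add_neg, P.v_pow hz] at h
    have : 0 ≤ (q : ℤ) * P.v z := by positivity
    omega
  rw [P.v_sub_eq_left hzq hz (by rw [P.v_pow hz]; nlinarith), P.v_pow hz]
  exact dvd_mul_right _ _

lemma dvd_v_of_isArtinSchreier_sub (hq : 2 ≤ q) (hx : x ≠ 0) (hy : y ≠ 0)
    (h : IsArtinSchreier q (x - y)) (hxy : P.v x < P.v y) (hneg : P.v x < 0) :
    (q : ℤ) ∣ P.v x := by
  rw [← P.v_sub_eq_left hx hy hxy] at hneg ⊢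
  exact P.dvd_v_of_isArtinSchreier hq (sub_ne_zero.mpr (ne_of_apply_ne P.v hxy.ne)) h hneg

lemma dvd_v_of_v_eq_zero (hq : 2 ≤ q) (hx : x ≠ 0) (hy : y ≠ 0) (hy0 : P.v y = 0)
    (h : IsArtinSchreier q (x - y)) (h_inv : IsArtinSchreier q (x⁻¹ - y⁻¹)) :
    (q : ℤ) ∣ P.v x := by
  rcases lt_trichotomy (P.v x) 0 with hneg | hzero | hpos
  · exact P.dvd_v_of_isArtinSchreier_sub hq hx hy h (by omega) hneg
  · exact hzero ▸ dvd_zero _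
  · rw [← dvd_neg, ← P.v_inv hx]
    exact P.dvd_v_of_isArtinSchreier_sub hq (inv_ne_zero hx) (inv_ne_zero hy) h_inv
      (by rw [P.v_inv hx, P.v_inv hy]; omega) (by rw [P.v_inv hx]; omega)

lemma v_ne_neg_one_of_isArtinSchreier (hq : 2 ≤ q) (hx0 : x ≠ 0) (hx : IsArtinSchreier q x) :
    P.v x ≠ -1 := by
  intro hv
  have h := P.dvd_v_of_isArtinSchreier hq hx0 hx (by omega)
  rw [hv, dvd_neg] at h
  have := Int.le_of_dvd one_pos h
  omega

lemma v_eq_neg_one_or_dvd (hq : 2 ≤ q) (hx : x ≠ 0) (hy : y ≠ 0) (hy1 : P.v y = -1)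
    (h : IsArtinSchreier q (x - y)) : P.v x < 0 ∧ (P.v x = -1 ∨ (q : ℤ) ∣ P.v x) := by
  rcases lt_trichotomy (P.v x) (-1) with hlt | heq | hgt
  · exact ⟨by omega, .inr (P.dvd_v_of_isArtinSchreier_sub hq hx hy h (by omega) (by omega))⟩
  · exact ⟨by omega, .inl heq⟩
  · rw [← hy1] at hgt
    have hxy := sub_ne_zero.mpr (ne_of_apply_ne P.v hgt.ne')
    exact absurd ((P.v_sub_eq_right hx hy hgt).trans hy1)
      (P.v_ne_neg_one_of_isArtinSchreier hq hxy h)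

lemma eq_one_of_isArtinSchreier_algebraMap_mul_sub (hq : 2 ≤ q) (hy : y ≠ 0) (hy1 : P.v y = -1)
    {c : F} (h : IsArtinSchreier q (algebraMap F M c * y - y)) : c = 1 := by
  by_contra hc
  have hc' : c - 1 ≠ 0 := sub_ne_zero.mpr hc
  rw [show algebraMap F M c * y - y = algebraMap F M (c - 1) * y by
    rw [map_sub, map_one]; ring] at h
  exact P.v_ne_neg_one_of_isArtinSchreier hq (mul_ne_zero ((map_ne_zero _).mpr hc') hy) h
    ((P.v_algebraMap_mul hc' hy).trans hy1)

end ArtinSchreier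

end FFPrime

section OfDivisor

variable {F M : Type*} [Field F] [Field M] [Algebra F M] {t : M} {l : F} {e : F →₀ ℤ}

/-- The element `l * ∏ c, (t - c) ^ e c` of `F(t)`: its divisor on the affine `t`-line is `e`, and
`-e.degree` is its order at infinity. -/
noncomputable def ofDivisor (t : M) (l : F) (e : F →₀ ℤ) : M :=
  algebraMap F M l * e.prod fun c n ↦ (t - algebraMap F M c) ^ n

lemma transcendental_sub_algebraMap (ht : Transcendental F t) (c : F) :
    Transcendental F (t - algebraMap F M c) := fun h ↦
  ht (by simpa using h.add (isAlgebraic_algebraMap c))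

lemma ne_zero_of_transcendental (ht : Transcendental F t) : t ≠ 0 := by
  rintro rfl
  exact ht isAlgebraic_zero

lemma sub_algebraMap_ne_zero (ht : Transcendental F t) (c : F) : t - algebraMap F M c ≠ 0 :=
  ne_zero_of_transcendental (transcendental_sub_algebraMap ht c)

lemma ofDivisor_ne_zero (ht : Transcendental F t) (hl : l ≠ 0) (e : F →₀ ℤ) :
    ofDivisor t l e ≠ 0 :=
  mul_ne_zero ((map_ne_zero _).mpr hl)
    (Finset.prod_ne_zero_iff.mpr fun c _ ↦ zpow_ne_zero _ (sub_algebraMap_ne_zero ht c))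

lemma ofDivisor_zero (t : M) (l : F) : ofDivisor t l 0 = algebraMap F M l := by
  simp [ofDivisor]

lemma ofDivisor_single (t : M) (c : F) :
    ofDivisor t 1 (Finsupp.single c 1) = t - algebraMap F M c := by
  simp [ofDivisor]

lemma ofDivisor_mul (ht : Transcendental F t) (l m : F) (d e : F →₀ ℤ) :
    ofDivisor t (l * m) (d + e) = ofDivisor t l d * ofDivisor t m e := by
  rw [ofDivisor, Finsupp.prod_add_index' (by simp)
    fun c ↦ zpow_add₀ (sub_algebraMap_ne_zero ht c), map_mul, mul_mul_mul_comm]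
  rfl

lemma ofDivisor_inv (ht : Transcendental F t) (hl : l ≠ 0) (e : F →₀ ℤ) :
    ofDivisor t l⁻¹ (-e) = (ofDivisor t l e)⁻¹ := by
  refine eq_inv_of_mul_eq_one_left ?_
  rw [← ofDivisor_mul ht, inv_mul_cancel₀ hl, neg_add_cancel, ofDivisor_zero, map_one]

lemma ofDivisor_pow (ht : Transcendental F t) (l : F) (e : F →₀ ℤ) (n : ℕ) :
    ofDivisor t (l ^ n) (n • e) = ofDivisor t l e ^ n := by
  induction n with
  | zero => simp [ofDivisor_zero]
  | succ n ih => rw [pow_succ, succ_nsmul, ofDivisor_mul ht, ih, pow_succ]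

lemma exists_ofDivisor_eq_aeval [IsAlgClosed F] (ht : Transcendental F t) (g : F[X]) :
    ∃ e : F →₀ ℤ, Polynomial.aeval t g = ofDivisor t g.leadingCoeff e := by
  have exists_prod_eq (s : Multiset F) :
      ∃ e : F →₀ ℤ, (s.map fun c ↦ t - algebraMap F M c).prod = ofDivisor t 1 e := by
    induction s using Multiset.induction with
    | empty => exact ⟨0, by simp [ofDivisor_zero]⟩
    | cons c s ih =>
      obtain ⟨e, he⟩ := ih
      refine ⟨Finsupp.single c 1 + e, ?_⟩
      rw [← one_mul (1 : F), ofDivisor_mul ht, ofDivisor_single, ← he, Multiset.map_cons,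
        Multiset.prod_cons]
  obtain ⟨e, he⟩ := exists_prod_eq g.roots
  refine ⟨e, ?_⟩
  rw [((IsAlgClosed.splits g).map (algebraMap F M)).aeval_eq_prod_aroots,
    Polynomial.aroots_def, (IsAlgClosed.splits g).roots_map, Multiset.map_map,
    ← mul_one g.leadingCoeff, ← zero_add e, ofDivisor_mul ht, ofDivisor_zero, ← he, mul_one]
  rfl

lemma exists_ofDivisor_eq [IsAlgClosed F] (ht : Transcendental F t) {w : M} (hw : w ≠ 0)
    (hwt : w ∈ F⟮t⟯) : ∃ l : F, l ≠ 0 ∧ ∃ e : F →₀ ℤ, w = ofDivisor t l e := by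
  obtain ⟨g, h, rfl⟩ := (mem_adjoin_simple_iff F w).mp hwt
  obtain ⟨hg, hh⟩ := div_ne_zero_iff.mp hw
  obtain ⟨d, hd⟩ := exists_ofDivisor_eq_aeval ht g
  obtain ⟨e, he⟩ := exists_ofDivisor_eq_aeval ht h
  have hg0 : g.leadingCoeff ≠ 0 := Polynomial.leadingCoeff_ne_zero.mpr (by rintro rfl; simp at hg)
  have hh0 : h.leadingCoeff ≠ 0 := Polynomial.leadingCoeff_ne_zero.mpr (by rintro rfl; simp at hh)
  refine ⟨g.leadingCoeff * h.leadingCoeff⁻¹, mul_ne_zero hg0 (inv_ne_zero hh0), d + -e, ?_⟩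
  rw [ofDivisor_mul ht, ofDivisor_inv ht hh0, hd, he, div_eq_mul_inv]

lemma exists_ofDivisor_eq_pow [IsAlgClosed F] (ht : Transcendental F t) (hl : l ≠ 0) {n : ℕ}
    (hn : n ≠ 0) (h : ∀ c, (n : ℤ) ∣ e c) :
    ∃ m : F, m ≠ 0 ∧ ∃ d : F →₀ ℤ, e = n • d ∧ ofDivisor t l e = ofDivisor t m d ^ n := by
  obtain ⟨m, rfl⟩ := IsAlgClosed.exists_pow_nat_eq l (Nat.pos_of_ne_zero hn)
  obtain ⟨d, rfl⟩ : ∃ d, e = n • d :=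
    ⟨e.mapRange (· / (n : ℤ)) (Int.zero_ediv _), by
      ext c
      simp [Int.mul_ediv_cancel' (h c)]⟩
  exact ⟨m, by rintro rfl; exact hl (zero_pow hn), d, rfl, ofDivisor_pow ht m d n⟩

end OfDivisor

namespace FFPrime

section Line

variable {F M : Type*} [Field F] [Field M] [Algebra F M] (P : FFPrime F M) {t : M} {l : F}

lemma v_sub_algebraMap_of_v_pos (ht : Transcendental F t) {b c : F}
    (hc : 0 < P.v (t - algebraMap F M c)) (hb : b ≠ c) : P.v (t - algebraMap F M b) = 0 := by
  have hbc : b - c ≠ 0 := sub_ne_zero.mpr hb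
  have h := P.v_sub_eq_right (sub_algebraMap_ne_zero ht c) ((map_ne_zero _).mpr hbc)
    (by rwa [P.triv _ hbc])
  rwa [P.triv _ hbc, map_sub, sub_sub_sub_cancel_right] at h

lemma v_sub_algebraMap_of_v_neg (ht : t ≠ 0) (hneg : P.v t < 0) (c : F) :
    P.v (t - algebraMap F M c) = P.v t := by
  rcases eq_or_ne c 0 with rfl | hc
  · simp
  · exact P.v_sub_eq_left ht ((map_ne_zero _).mpr hc) (by rwa [P.triv _ hc])

lemma v_ofDivisor (ht : Transcendental F t) (hl : l ≠ 0) (e : F →₀ ℤ) :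
    P.v (ofDivisor t l e) = e.sum fun c n ↦ n * P.v (t - algebraMap F M c) := by
  have hne c : (t - algebraMap F M c) ^ e c ≠ 0 := zpow_ne_zero _ (sub_algebraMap_ne_zero ht c)
  rw [ofDivisor, Finsupp.prod, P.v_algebraMap_mul hl (Finset.prod_ne_zero_iff.mpr fun c _ ↦ hne c),
    P.v_prod _ fun c _ ↦ hne c]
  exact Finset.sum_congr rfl fun c _ ↦ P.v_zpow (sub_algebraMap_ne_zero ht c) _

lemma v_ofDivisor_of_v_pos (ht : Transcendental F t) (hl : l ≠ 0) (e : F →₀ ℤ) {c : F}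
    (hc : 0 < P.v (t - algebraMap F M c)) :
    P.v (ofDivisor t l e) = e c * P.v (t - algebraMap F M c) := by
  rw [P.v_ofDivisor ht hl, Finsupp.sum, Finset.sum_eq_single c]
  · intro b _ hb
    rw [P.v_sub_algebraMap_of_v_pos ht hc hb, mul_zero]
  · intro hce
    rw [Finsupp.notMem_support_iff.mp hce, zero_mul]

lemma v_ofDivisor_of_v_neg (ht : Transcendental F t) (hl : l ≠ 0) (e : F →₀ ℤ)
    (hneg : P.v t < 0) : P.v (ofDivisor t l e) = e.degree * P.v t := by
  simp only [P.v_ofDivisor ht hl, P.v_sub_algebraMap_of_v_neg (ne_zero_of_transcendental ht) hneg,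
    Finsupp.sum, Finsupp.degree_apply, Finset.sum_mul]

lemma v_sub_algebraMap_eq_one_of_unramifiedOver [IsAlgClosed F] (ht : Transcendental F t) {c : F}
    (hc : 0 < P.v (t - algebraMap F M c)) (h : P.UnramifiedOver t) :
    P.v (t - algebraMap F M c) = 1 := by
  obtain ⟨r, hr, hr0, hr1⟩ := h
  obtain ⟨l, hl, e, rfl⟩ := exists_ofDivisor_eq ht hr0 hr
  rw [P.v_ofDivisor_of_v_pos ht hl e hc] at hr1
  exact Int.eq_one_of_dvd_one hc.le ⟨e c, by rw [mul_comm, hr1]⟩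

lemma v_nonneg_of_isArtinSchreier_mul_pow_sub [IsAlgClosed F] {p a : ℕ} [ExpChar M p]
    (hq : 3 ≤ p ^ a) (ht : Transcendental F t) {c : F} (hc0 : c ≠ 0)
    (hc : P.v (t - algebraMap F M c) = 1) {f : M} (hf : f ≠ 0)
    (h : IsArtinSchreier (p ^ a) (t * f ^ p ^ a - t)) : 0 ≤ P.v f := by
  by_contra! hneg
  have hvt : P.v t = 0 := by simpa using P.v_sub_algebraMap_of_v_pos ht (by omega) hc0.symm
  obtain ⟨γ, rfl⟩ := IsAlgClosed.exists_pow_nat_eq c (n := p ^ a) (by omega)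
  have hγ : γ ≠ 0 := by
    rintro rfl
    exact hc0 (zero_pow (by omega))
  rw [map_pow] at hc
  set g := algebraMap F M γ
  have hg : g ≠ 0 := (map_ne_zero _).mpr hγ
  have hτ : t - g ^ p ^ a ≠ 0 := by simpa [g] using sub_algebraMap_ne_zero ht (γ ^ p ^ a)
  have hfq : f ^ p ^ a ≠ 0 := pow_ne_zero _ hf
  have h_left : P.v ((t - g ^ p ^ a) * f ^ p ^ a) = 1 + (p ^ a : ℕ) * P.v f := by
    rw [P.map_mul _ _ hτ hfq, P.v_pow hf, hc]
  have h_lt : P.v (g * f) < P.v t := by rwa [P.v_algebraMap_mul hγ hf, hvt]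
  have h_right : P.v (t - g * f) = P.v f := by
    rw [P.v_sub_eq_right (ne_zero_of_transcendental ht) (mul_ne_zero hg hf) h_lt,
      P.v_algebraMap_mul hγ hf]
  have hq' : (3 : ℤ) ≤ (p ^ a : ℕ) := mod_cast hq
  have h_dvd := P.dvd_v_of_isArtinSchreier_sub (by omega) (mul_ne_zero hτ hfq)
    (sub_ne_zero.mpr (ne_of_apply_ne P.v h_lt.ne')) (h.sub_pow_mul_pow_sub g)
    (by rw [h_left, h_right]; nlinarith) (by rw [h_left]; nlinarith)
  rw [h_left, dvd_add_left (dvd_mul_right _ _)] at h_dvd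
  have := Int.le_of_dvd one_pos h_dvd
  omega

end Line

end FFPrime

section Descent

variable {F M : Type*} [Field F] [Field M] [Algebra F M] {t : M} {l : F} {e : F →₀ ℤ}

lemma dvd_apply_of_isArtinSchreier {q : ℕ} (hq : 2 ≤ q) (ht : Transcendental F t) (hl : l ≠ 0)
    {c : F} (hc : c ≠ 0) (hunr : e c ≠ 0 → ∃ P : FFPrime F M, P.v (t - algebraMap F M c) = 1)
    (h : IsArtinSchreier q (ofDivisor t l e - t))
    (h_inv : IsArtinSchreier q ((ofDivisor t l e)⁻¹ - t⁻¹)) : (q : ℤ) ∣ e c := by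
  rcases eq_or_ne (e c) 0 with hec | hec
  · exact hec ▸ dvd_zero _
  · obtain ⟨P, hP⟩ := hunr hec
    have hvt : P.v t = 0 := by
      simpa using P.v_sub_algebraMap_of_v_pos ht (c := c) (by omega) hc.symm
    have hdvd := P.dvd_v_of_v_eq_zero hq (ofDivisor_ne_zero ht hl e)
      (ne_zero_of_transcendental ht) hvt h h_inv
    rwa [P.v_ofDivisor_of_v_pos ht hl e (hP ▸ one_pos), hP, mul_one] at hdvd

lemma apply_zero_eq_one_or_dvd {q : ℕ} (hq : 2 ≤ q) (ht : Transcendental F t) (hl : l ≠ 0)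
    (hzero : ∃ P : FFPrime F M, P.v t = 1)
    (h_inv : IsArtinSchreier q ((ofDivisor t l e)⁻¹ - t⁻¹)) :
    0 < e 0 ∧ (e 0 = 1 ∨ (q : ℤ) ∣ e 0) := by
  obtain ⟨P, hP⟩ := hzero
  have ht0 := ne_zero_of_transcendental ht
  have hw0 := ofDivisor_ne_zero ht hl e
  have hv : P.v (ofDivisor t l e) = e 0 := by
    simpa [hP] using P.v_ofDivisor_of_v_pos ht hl e (c := 0) (by simp [hP])
  have h := P.v_eq_neg_one_or_dvd hq (inv_ne_zero hw0) (inv_ne_zero ht0)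
    (by rw [P.v_inv ht0, hP]) h_inv
  rwa [P.v_inv hw0, hv, neg_lt_zero, neg_inj, dvd_neg] at h

lemma degree_eq_one_or_dvd {q : ℕ} (hq : 2 ≤ q) (ht : Transcendental F t) (hl : l ≠ 0)
    (hpole : ∃ P : FFPrime F M, P.v t = -1) (h : IsArtinSchreier q (ofDivisor t l e - t)) :
    e.degree = 1 ∨ (q : ℤ) ∣ e.degree := by
  obtain ⟨P, hP⟩ := hpole
  have hdvd := (P.v_eq_neg_one_or_dvd hq (ofDivisor_ne_zero ht hl e)
    (ne_zero_of_transcendental ht) hP h).2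
  rwa [P.v_ofDivisor_of_v_neg ht hl e (by omega), hP, mul_neg_one, neg_inj, dvd_neg] at hdvd

lemma finsupp_eq_zero_of_nonneg_of_degree_eq_zero {ι R : Type*} [AddCommMonoid R] [PartialOrder R]
    [IsOrderedAddMonoid R] {d : ι →₀ R} (hd : ∀ i, 0 ≤ d i) (hdeg : d.degree = 0) : d = 0 := by
  rw [Finsupp.degree_apply, Finset.sum_eq_zero_iff_of_nonneg fun i _ ↦ hd i] at hdeg
  rw [← Finsupp.support_eq_empty, Finset.eq_empty_iff_forall_notMem]
  exact fun i hi ↦ Finsupp.mem_support_iff.mp hi (hdeg i hi)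

variable [IsAlgClosed F] {p a : ℕ} [ExpChar M p]

lemma apply_nonneg_of_isArtinSchreier_mul_pow_sub (hq : 3 ≤ p ^ a) (ht : Transcendental F t)
    (hl : l ≠ 0) {c : F} (hc : c ≠ 0)
    (hunr : e c ≠ 0 → ∃ P : FFPrime F M, P.v (t - algebraMap F M c) = 1)
    (h : IsArtinSchreier (p ^ a) (t * ofDivisor t l e ^ p ^ a - t)) : 0 ≤ e c := by
  rcases eq_or_ne (e c) 0 with hec | hec
  · exact hec.ge
  · obtain ⟨P, hP⟩ := hunr hec
    have hv := P.v_nonneg_of_isArtinSchreier_mul_pow_sub hq ht hc hP (ofDivisor_ne_zero ht hl e) h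
    rwa [P.v_ofDivisor_of_v_pos ht hl e (hP ▸ one_pos), hP, mul_one] at hv

lemma mul_ofDivisor_pow_eq_self (hq : 3 ≤ p ^ a) (ht : Transcendental F t) (hl : l ≠ 0)
    (hpole : ∃ P : FFPrime F M, P.v t = -1)
    (hunr : ∀ c ≠ 0, e c ≠ 0 → ∃ P : FFPrime F M, P.v (t - algebraMap F M c) = 1)
    (he0 : e 0 = 0) (hdeg : e.degree = 0)
    (h : IsArtinSchreier (p ^ a) (t * ofDivisor t l e ^ p ^ a - t)) :
    t * ofDivisor t l e ^ p ^ a = t := by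
  have he_nonneg (c : F) : 0 ≤ e c := by
    rcases eq_or_ne c 0 with rfl | hc
    · exact he0.ge
    · exact apply_nonneg_of_isArtinSchreier_mul_pow_sub hq ht hl hc (hunr c hc) h
  obtain rfl := finsupp_eq_zero_of_nonneg_of_degree_eq_zero he_nonneg hdeg
  obtain ⟨P, hP⟩ := hpole
  rw [ofDivisor_zero, ← map_pow, mul_comm] at h ⊢
  rw [P.eq_one_of_isArtinSchreier_algebraMap_mul_sub (by omega) (ne_zero_of_transcendental ht) hP h,
    map_one, one_mul]

lemma ofDivisor_eq_of_apply_zero_eq_one (hq : 3 ≤ p ^ a) (ht : Transcendental F t) (hl : l ≠ 0)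
    (hpole : ∃ P : FFPrime F M, P.v t = -1)
    (hunr : ∀ c ≠ 0, e c ≠ 0 → ∃ P : FFPrime F M, P.v (t - algebraMap F M c) = 1)
    (hdvd : ∀ c ≠ 0, ((p ^ a : ℕ) : ℤ) ∣ e c) (he0 : e 0 = 1)
    (h : IsArtinSchreier (p ^ a) (ofDivisor t l e - t)) : ofDivisor t l e = t := by
  have hq0 : p ^ a ≠ 0 := by omega
  obtain ⟨m, hm, d, hd, hf⟩ := exists_ofDivisor_eq_pow (e := e - Finsupp.single 0 1) ht hl hq0
    fun c ↦ by
      rcases eq_or_ne c 0 with rfl | hc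
      · simp [he0]
      · simpa [hc] using hdvd c hc
  obtain rfl : e = Finsupp.single 0 1 + p ^ a • d := by rw [← hd, add_sub_cancel]
  have hw : ofDivisor t l (Finsupp.single 0 1 + p ^ a • d) = t * ofDivisor t m d ^ p ^ a := by
    rw [← hf, hd, ← one_mul l, ofDivisor_mul ht, ofDivisor_single, one_mul, map_zero, sub_zero]
  have hd0 : d 0 = 0 := by
    rw [Finsupp.add_apply, Finsupp.single_eq_same, add_eq_left, Finsupp.smul_apply] at he0
    exact (smul_eq_zero.mp he0).resolve_left hq0
  have hdeg : d.degree = 0 := by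
    have h_degree := degree_eq_one_or_dvd (by omega) ht hl hpole h
    rw [map_add, map_nsmul, Finsupp.degree_single, nsmul_eq_mul, add_eq_left,
      dvd_add_left (dvd_mul_right _ _)] at h_degree
    rcases h_degree with h_zero | h_dvd_one
    · exact (mul_eq_zero.mp h_zero).resolve_left (by omega)
    · have := Int.le_of_dvd one_pos h_dvd_one
      omega
  rw [hw] at h ⊢
  refine mul_ofDivisor_pow_eq_self hq ht hm hpole (fun c hc hdc ↦ hunr c hc ?_) hd0 hdeg h
  rw [Finsupp.add_apply, Finsupp.single_eq_of_ne hc, zero_add]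
  exact smul_ne_zero hq0 hdc

theorem exists_ofDivisor_eq_pow_pow (hq : 3 ≤ p ^ a) (ht : Transcendental F t) (hl : l ≠ 0)
    (hzero : ∃ P : FFPrime F M, P.v t = 1) (hpole : ∃ P : FFPrime F M, P.v t = -1)
    (hunr : ∀ c ≠ 0, e c ≠ 0 → ∃ P : FFPrime F M, P.v (t - algebraMap F M c) = 1)
    (h : IsArtinSchreier (p ^ a) (ofDivisor t l e - t))
    (h_inv : IsArtinSchreier (p ^ a) ((ofDivisor t l e)⁻¹ - t⁻¹)) :
    ∃ s : ℕ, ofDivisor t l e = t ^ p ^ (a * s) := by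
  induction hn : (e 0).toNat using Nat.strong_induction_on generalizing l e with
  | _ n ih =>
    have hdvd c (hc : c ≠ 0) : ((p ^ a : ℕ) : ℤ) ∣ e c :=
      dvd_apply_of_isArtinSchreier (by omega) ht hl hc (hunr c hc) h h_inv
    obtain ⟨hpos, he0 | he0⟩ := apply_zero_eq_one_or_dvd (by omega) ht hl hzero h_inv
    · exact ⟨0, by
        simpa using ofDivisor_eq_of_apply_zero_eq_one hq ht hl hpole hunr hdvd he0 h⟩
    · have hdvd_all c : ((p ^ a : ℕ) : ℤ) ∣ e c := by
        rcases eq_or_ne c 0 with rfl | hc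
        exacts [he0, hdvd c hc]
      have hq0 : p ^ a ≠ 0 := by omega
      obtain ⟨m, hm, d, rfl, hf⟩ := exists_ofDivisor_eq_pow ht hl hq0 hdvd_all
      rw [hf] at h h_inv ⊢
      rw [← inv_pow] at h_inv
      have hlt : (d 0).toNat < n := by
        rw [Finsupp.smul_apply, nsmul_eq_mul] at hpos hn
        have hd0 : 0 < d 0 := pos_of_mul_pos_right hpos (by positivity)
        have : 1 * d 0 < (p ^ a : ℕ) * d 0 := by gcongr; exact_mod_cast (by omega : 1 < p ^ a)
        omega
      obtain ⟨s, hs⟩ := ih _ hlt hm (fun c hc hdc ↦ hunr c hc (smul_ne_zero hq0 hdc))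
        (by simpa using h.sub (isArtinSchreier_pow_sub_self _ (ofDivisor t m d)))
        (by simpa using h_inv.sub (isArtinSchreier_pow_sub_self _ (ofDivisor t m d)⁻¹)) rfl
      exact ⟨s + 1, by rw [hs, ← pow_mul, ← pow_add, mul_add_one]⟩

end Descent

section Existence

open IntermediateField.algebraAdjoinAdjoin

/-- The prime `x ↦ -log |x|` of `M` attached to a nonzero prime ideal of a Dedekind domain with
fraction field `M`. -/
noncomputable def FFPrime.ofHeightOneSpectrum {F R : Type*} (M : Type*) [Field F] [Field M]
    [CommRing R] [IsDedekindDomain R] [Algebra F R] [Algebra F M] [Algebra R M]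
    [IsScalarTower F R M] [IsFractionRing R M] (𝔭 : IsDedekindDomain.HeightOneSpectrum R) :
    FFPrime F M where
  v x := -WithZero.log (𝔭.valuation M x)
  map_mul x y hx hy := by
    rw [_root_.map_mul, WithZero.log_mul ((𝔭.valuation M).ne_zero_iff.mpr hx)
      ((𝔭.valuation M).ne_zero_iff.mpr hy), neg_add]
  add_min x y hx hy hxy := by
    rw [← (𝔭.valuation M).ne_zero_iff] at hx hy hxy
    rcases (𝔭.valuation M).map_add' x y with h | h
    · exact min_le_of_left_le (neg_le_neg ((WithZero.log_le_log hxy hx).mpr h))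
    · exact min_le_of_right_le (neg_le_neg ((WithZero.log_le_log hxy hy).mpr h))
  surj n := by
    obtain ⟨π, hπ⟩ := 𝔭.valuation_exists_uniformizer M
    have hπ0 : π ≠ 0 := by
      rintro rfl
      exact WithZero.exp_ne_zero (hπ.symm.trans (map_zero _))
    exact ⟨π ^ n, zpow_ne_zero n hπ0, by
      rw [map_zpow₀, hπ, WithZero.log_zpow, WithZero.log_exp]
      simp⟩
  triv c hc := by
    have hle (b : F) : 𝔭.valuation M (algebraMap F M b) ≤ 1 := by
      rw [IsScalarTower.algebraMap_apply F R M]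
      exact 𝔭.valuation_le_one _
    have hge := hle c⁻¹
    rw [map_inv₀, map_inv₀, inv_le_one₀ (by simpa [zero_lt_iff] using hc)] at hge
    rw [(hle c).antisymm hge, WithZero.log_one, neg_zero]

lemma FFPrime.exists_v_algebraMap_pos (F : Type*) {R : Type*} (M : Type*) [Field F] [Field M]
    [CommRing R] [IsDedekindDomain R] [Algebra F R] [Algebra F M] [Algebra R M]
    [IsScalarTower F R M] [IsFractionRing R M] {r : R} (hr0 : r ≠ 0) (hr : ¬IsUnit r) :
    ∃ P : FFPrime F M, 0 < P.v (algebraMap R M r) := by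
  obtain ⟨m, hm, hrm⟩ := exists_max_ideal_of_mem_nonunits hr
  let 𝔭 : IsDedekindDomain.HeightOneSpectrum R :=
    ⟨m, hm.isPrime, fun h ↦ hr0 (by rwa [h, Ideal.mem_bot] at hrm)⟩
  have hr1 : 𝔭.valuation M (algebraMap R M r) < 1 := (𝔭.valuation_lt_one_iff_mem r).mpr hrm
  have hv0 : 𝔭.valuation M (algebraMap R M r) ≠ 0 := by simpa using hr0
  refine ⟨.ofHeightOneSpectrum M 𝔭, ?_⟩
  rw [← WithZero.log_lt_log hv0 one_ne_zero, WithZero.log_one] at hr1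
  exact neg_pos.mpr hr1

variable {F M : Type*} [Field F] [Field M] [Algebra F M] {s t : M}

lemma FFPrime.exists_v_pos (hs : Transcendental F s) [FiniteDimensional F⟮s⟯ M]
    [Algebra.IsSeparable F⟮s⟯ M] : ∃ P : FFPrime F M, 0 < P.v s := by
  let A := Algebra.adjoin F {s}
  let e : F[X] ≃ₐ[F] A := Polynomial.algEquivOfTranscendental F s hs
  have : IsPrincipalIdealRing A := .of_surjective e.toRingHom e.surjective
  have : IsDedekindDomain (integralClosure A M) := integralClosure.isDedekindDomain A F⟮s⟯ M
  have : IsFractionRing (integralClosure A M) M :=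
    integralClosure.isFractionRing_of_finite_extension F⟮s⟯ M
  have hinj : Function.Injective (algebraMap A (integralClosure A M)) :=
    .of_comp (f := algebraMap (integralClosure A M) M) Subtype.val_injective
  have hloc : IsLocalHom (algebraMap A (integralClosure A M)) :=
    (algebraMap_isIntegral_iff.mpr inferInstance).isLocalHom hinj
  have he : (e Polynomial.X : M) = s :=
    congrArg Subtype.val (Polynomial.algEquivOfTranscendental_apply_X F s hs)
  have hX : ¬IsUnit (e Polynomial.X) := fun h ↦
    Polynomial.not_isUnit_X ((MulEquiv.isUnit_map e).mp h)
  obtain ⟨P, hP⟩ := FFPrime.exists_v_algebraMap_pos F M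
    (r := algebraMap A (integralClosure A M) (e Polynomial.X))
    ((map_ne_zero_iff _ hinj).mpr (by simp)) (fun h ↦ hX (hloc.map_nonunit _ h))
  exact ⟨P, by rwa [← he]⟩

lemma FFPrime.exists_v_pos_of_adjoin_eq (hs : Transcendental F s) (hst : F⟮s⟯ = F⟮t⟯)
    (hfin : FiniteDimensional F⟮t⟯ M) (hsep : Algebra.IsSeparable F⟮t⟯ M) :
    ∃ P : FFPrime F M, 0 < P.v s := by
  rw [← hst] at hfin hsep
  exact FFPrime.exists_v_pos hs

lemma adjoin_sub_algebraMap (t : M) (c : F) : F⟮t - algebraMap F M c⟯ = F⟮t⟯ := by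
  refine le_antisymm ?_ ?_ <;> rw [adjoin_simple_le_iff]
  · exact sub_mem (mem_adjoin_simple_self F t) (_root_.algebraMap_mem _ c)
  · simpa using
      add_mem (mem_adjoin_simple_self F (t - algebraMap F M c)) (_root_.algebraMap_mem _ c)

lemma adjoin_inv (t : M) : F⟮t⁻¹⟯ = F⟮t⟯ := by
  refine le_antisymm ?_ ?_ <;> rw [adjoin_simple_le_iff]
  · exact inv_mem (mem_adjoin_simple_self F t)
  · simpa using inv_mem (mem_adjoin_simple_self F t⁻¹)

end Existence

theorem stmt_15_general {F M : Type*} [Field F] [Field M] [Algebra F M] [IsAlgClosed F]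
    {p a : ℕ} [ExpChar F p] (hq : 3 ≤ p ^ a) {t : M} (ht : Transcendental F t)
    (hplace : ∀ c : F, c ≠ 0 → ∃ P : FFPrime F M, 0 < P.v (t - algebraMap F M c))
    (hzero : ∃ P : FFPrime F M, P.v t = 1) (hpole : ∃ P : FFPrime F M, P.v t = -1)
    {w : M} (hw0 : w ≠ 0) (hwmem : w ∈ F⟮t⟯)
    (hram : ∀ P : FFPrime F M, P.v w ≠ 0 → P.UnramifiedOver t)
    (hex : ∃ u v : M, 1 / w - 1 / t = u ^ p ^ a - u ∧ w - t = v ^ p ^ a - v) :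
    ∃ s : ℕ, w = t ^ p ^ (a * s) := by
  have := expChar_of_injective_algebraMap (algebraMap F M).injective p
  obtain ⟨l, hl, e, rfl⟩ := exists_ofDivisor_eq ht hw0 hwmem
  obtain ⟨u, v, hu, hv⟩ := hex
  have hunr c (hc : c ≠ 0) (hec : e c ≠ 0) : ∃ P : FFPrime F M, P.v (t - algebraMap F M c) = 1 := by
    obtain ⟨P, hP⟩ := hplace c hc
    refine ⟨P, P.v_sub_algebraMap_eq_one_of_unramifiedOver ht hP (hram P ?_)⟩
    rw [P.v_ofDivisor_of_v_pos ht hl e hP]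
    exact mul_ne_zero hec hP.ne'
  exact exists_ofDivisor_eq_pow_pow hq ht hl hzero hpole hunr ⟨v, hv⟩ ⟨u, by simpa using hu⟩

/-- Let `F` be algebraically closed of characteristic `p > 0`, with `a = 1` if `p > 2`
and `a = 2` if `p = 2`. Let `M` be a function field over `F` and `t ∈ M` transcendental
with `M/F(t)` finite separable and all zeros and poles of `t` simple. Let `w` be a
nonzero element of `F(t) ⊆ M` whose zeros and poles all lie at primes unramified over
`F(t)`. If there exist `u, v ∈ M` with `1/w - 1/t = u^{p^a} - u` and
`w - t = v^{p^a} - v`, then `w = t^{p^{as}}` for some natural number `s`. -/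
theorem stmt_15 {F M : Type*} [Field F] [Field M] [Algebra F M] [IsAlgClosed F]
    (p : ℕ) (hp : p.Prime) [CharP F p]
    (a : ℕ) (ha : (2 < p ∧ a = 1) ∨ (p = 2 ∧ a = 2))
    (t : M) (htrans : Transcendental F t)
    (hfin : FiniteDimensional (IntermediateField.adjoin F {t}) M)
    (hsep : Algebra.IsSeparable (IntermediateField.adjoin F {t}) M)
    (hsimple : ∀ P : FFPrime F M, P.v t ∈ ({-1, 0, 1} : Set ℤ))
    (w : M) (hw0 : w ≠ 0) (hwmem : w ∈ IntermediateField.adjoin F {t})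
    (hram : ∀ P : FFPrime F M, P.v w ≠ 0 → P.UnramifiedOver t)
    (hex : ∃ u v : M, 1 / w - 1 / t = u ^ p ^ a - u ∧ w - t = v ^ p ^ a - v) :
    ∃ s : ℕ, w = t ^ p ^ (a * s) := by
  have := ExpChar.prime hp (R := F)
  have hq : 3 ≤ p ^ a := by
    rcases ha with ⟨hp2, rfl⟩ | ⟨rfl, rfl⟩
    exacts [by rwa [pow_one], by norm_num]
  have hplace (c : F) (_ : c ≠ 0) : ∃ P : FFPrime F M, 0 < P.v (t - algebraMap F M c) :=
    FFPrime.exists_v_pos_of_adjoin_eq (transcendental_sub_algebraMap htrans c)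
      (adjoin_sub_algebraMap t c) hfin hsep
  have hzero : ∃ P : FFPrime F M, P.v t = 1 := by
    obtain ⟨P, hP⟩ := FFPrime.exists_v_pos_of_adjoin_eq htrans rfl hfin hsep
    rcases hsimple P with h | h | h
    exacts [by omega, by omega, ⟨P, h⟩]
  have hpole : ∃ P : FFPrime F M, P.v t = -1 := by
    obtain ⟨P, hP⟩ := FFPrime.exists_v_pos_of_adjoin_eq
      (mt IsAlgebraic.inv_iff.mp htrans) (adjoin_inv t) hfin hsep
    rw [P.v_inv (ne_zero_of_transcendental htrans)] at hP
    rcases hsimple P with h | h | (h : P.v t = 1)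
    exacts [⟨P, h⟩, by omega, by omega]
  exact stmt_15_general hq htrans hplace hzero hpole hw0 hwmem hram hex
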